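/- arXiv:0809.1584 — 2 statements merged into one kernel-verified Lean document; each statement's English description precedes it below -/
import Mathlib

section
/- Let N ≥ 2 and let X and ω be N×N traceless skew-Hermitian complex matrices. Let A₁ ≥ A₂ ≥ ⋯ ≥ A_N be the eigenvalues (with multiplicity) of the Hermitian matrix −iX and let M₁ ≥ ⋯ ≥ M_N be those of −iω. Let λ₁ > ⋯ > λ_r be the distinct eigenvalues of −iω, let V_k ⊆ ℂ^N be the sum of the eigenspaces of −iω for λ₁,…,λ_k, and let d_k = dim V_k. Then −Tr(ωX) ≤ Σ_{j=1}^N A_j·M_j, and equality holds if and only if X commutes with ω (in which case X preserves each V_k) and for every k = 1,…,r the trace of the restriction of −iX to V_k equals A₁ + ⋯ + A_{d_k}. -/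
open Matrix BigOperators

lemma aux_kf {N : ℕ} (A p : Fin N → ℝ) (hA : Antitone A) (h0 : ∀ l, 0 ≤ p l) (h1 : ∀ l, p l ≤ 1)
    (d : ℕ) (hd0 : 0 < d) (hdN : d ≤ N) (hs : ∑ l, p l = d) :
    ∃ c : ℝ, ∑ l, A l * p l ≤ ∑ l ∈ Finset.univ.filter (fun l : Fin N => (l : ℕ) < d), A l ∧
      (∑ l, A l * p l = ∑ l ∈ Finset.univ.filter (fun l : Fin N => (l : ℕ) < d), A l →
        ∀ l, (c < A l → p l = 1) ∧ (A l < c → p l = 0)) := by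
  set c := A ⟨d - 1, by omega⟩ with hc
  have hcard : ∑ l : Fin N, (if (l : ℕ) < d then (1 : ℝ) else 0) = d := by
    rw [← Finset.sum_filter]
    simp [Fin.card_filter_val_lt, hdN]
  have key : ∑ l ∈ Finset.univ.filter (fun l : Fin N => (l : ℕ) < d), A l - ∑ l, A l * p l
      = ∑ l : Fin N, (A l - c) * ((if (l : ℕ) < d then (1 : ℝ) else 0) - p l) := by
    have : ∀ l : Fin N, (A l - c) * ((if (l : ℕ) < d then (1 : ℝ) else 0) - p l)
       = (if (l : ℕ) < d then A l else 0) - A l * p l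
          - c * ((if (l : ℕ) < d then (1 : ℝ) else 0) - p l) := by
      intro l; split_ifs <;> ring
    rw [Finset.sum_congr rfl (fun l _ => this l), Finset.sum_sub_distrib, ← Finset.mul_sum,
      Finset.sum_sub_distrib, Finset.sum_sub_distrib, hcard, hs, Finset.sum_filter]
    ring
  have hn : ∀ l ∈ Finset.univ, 0 ≤ (A l - c) * ((if (l : ℕ) < d then (1 : ℝ) else 0) - p l) := by
    intro l _
    split_ifs with h
    · exact mul_nonneg (sub_nonneg.2 (hA (by rw [Fin.le_def]; simp; omega)))
        (sub_nonneg.2 (h1 l))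
    · have : A l ≤ c := hA (by rw [Fin.le_def]; simp; omega)
      nlinarith [h0 l]
  refine ⟨c, by linarith [Finset.sum_nonneg hn], fun he l => ?_⟩
  have hz := (Finset.sum_eq_zero_iff_of_nonneg hn).1 (by linarith) l (Finset.mem_univ _)
  constructor
  · intro h
    have hl : (l : ℕ) < d := by
      by_contra h'
      have : A l ≤ c := hA (by rw [Fin.le_def]; simp; omega)
      linarith
    rw [if_pos hl] at hz
    rcases mul_eq_zero.1 hz with h' | h' <;> linarith
  · intro h
    have hl : ¬ (l : ℕ) < d := by
      intro h'
      have : c ≤ A l := hA (by rw [Fin.le_def]; simp; omega)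
      linarith
    rw [if_neg hl] at hz
    rcases mul_eq_zero.1 hz with h' | h' <;> linarith

lemma aux_abel (m e : ℕ → ℝ) (n : ℕ) :
    ∑ j ∈ Finset.range (n + 1), m j * e j =
      ∑ j ∈ Finset.range n, (m j - m (j + 1)) * ∑ i ∈ Finset.range (j + 1), e i
        + m n * ∑ i ∈ Finset.range (n + 1), e i := by
  induction n with
  | zero => simp
  | succ n ih =>
    rw [Finset.sum_range_succ, ih, Finset.sum_range_succ e (n + 1),
      Finset.sum_range_succ (fun j => (m j - m (j + 1)) * ∑ i ∈ Finset.range (j + 1), e i) n]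
    ring

lemma aux_abel2 {N : ℕ} (M e : Fin N → ℝ) (hM : Antitone M)
    (hE : ∀ d ≤ N, 0 ≤ ∑ j ∈ Finset.univ.filter (fun j : Fin N => (j : ℕ) < d), e j)
    (hN : ∑ j, e j = 0) :
    0 ≤ ∑ j, M j * e j ∧
    (∑ j, M j * e j = 0 ↔ ∀ j k : Fin N, (k : ℕ) = j + 1 → M k < M j →
      ∑ i ∈ Finset.univ.filter (fun i : Fin N => (i : ℕ) < k), e i = 0) := by
  rcases N with _ | n
  · simp
  let m' : ℕ → ℝ := fun j => if h : j < n + 1 then M ⟨j, h⟩ else 0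
  let e' : ℕ → ℝ := fun j => if h : j < n + 1 then e ⟨j, h⟩ else 0
  have hm' : ∀ j : Fin (n + 1), m' j = M j := fun j => dif_pos j.2
  have he' : ∀ j : Fin (n + 1), e' j = e j := fun j => dif_pos j.2
  have hf : ∀ d ≤ n + 1, ∑ j ∈ Finset.range d, e' j =
      ∑ j ∈ Finset.univ.filter (fun j : Fin (n + 1) => (j : ℕ) < d), e j := by
    intro d hd
    rw [Finset.sum_filter]
    have := Finset.sum_range (n := n + 1) (fun j => if j < d then e' j else 0)
    simp only [he'] at this
    rw [← this, ← Finset.sum_filter]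
    congr 1
    ext j; simp; omega
  have hs : ∑ j, M j * e j = ∑ j ∈ Finset.range n, (m' j - m' (j + 1)) *
      ∑ i ∈ Finset.univ.filter (fun i : Fin (n + 1) => (i : ℕ) < j + 1), e i := by
    have h1 := aux_abel m' e' n
    rw [Finset.sum_range] at h1
    simp only [hm', he'] at h1
    rw [h1, Finset.sum_range (n := n + 1)]
    simp only [he', hN, mul_zero, add_zero]
    refine Finset.sum_congr rfl fun j hj => ?_
    rw [hf _ (by simp at hj; omega)]
  have hn : ∀ j ∈ Finset.range n, 0 ≤ (m' j - m' (j + 1)) *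
      ∑ i ∈ Finset.univ.filter (fun i : Fin (n + 1) => (i : ℕ) < j + 1), e i := by
    intro j hj
    rw [Finset.mem_range] at hj
    refine mul_nonneg ?_ (hE _ (by omega))
    have := hm' ⟨j, by omega⟩
    have h2 := hm' ⟨j + 1, by omega⟩
    simp only at this h2
    rw [this, h2, sub_nonneg]
    exact hM (by simp [Fin.le_def])
  rw [hs]
  refine ⟨Finset.sum_nonneg hn, ?_⟩
  rw [Finset.sum_eq_zero_iff_of_nonneg hn]
  constructor
  · intro h j k hk hjk
    have := h j (by simp; omega)
    rw [hm', ← hk, hm'] at this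
    rcases mul_eq_zero.1 this with h' | h'
    · linarith
    · exact h'
  · intro h j hj
    rw [Finset.mem_range] at hj
    have h1 := hm' ⟨j, by omega⟩
    have h2 := hm' ⟨j + 1, by omega⟩
    simp only at h1 h2
    rw [h1, h2]
    have hle : M ⟨j + 1, by omega⟩ ≤ M ⟨j, by omega⟩ := hM (by simp [Fin.le_def])
    rcases hle.eq_or_lt with h' | h'
    · rw [h']; simp
    · rw [h ⟨j, by omega⟩ ⟨j + 1, by omega⟩ rfl h']; simp

lemma aux_row {N : ℕ} (T : Matrix (Fin N) (Fin N) ℂ) (hT : T * Tᴴ = 1) (j : Fin N) :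
    ∑ l, Complex.normSq (T j l) = 1 := by
  have := congrFun (congrFun hT j) j
  rw [Matrix.mul_apply] at this
  simp only [conjTranspose_apply, one_apply_eq, RCLike.star_def, Complex.mul_conj] at this
  exact_mod_cast this

lemma aux_col {N : ℕ} (T : Matrix (Fin N) (Fin N) ℂ) (hT : Tᴴ * T = 1) (l : Fin N) :
    ∑ j, Complex.normSq (T j l) = 1 := by
  have := congrFun (congrFun hT l) l
  rw [Matrix.mul_apply] at this
  simp only [conjTranspose_apply, one_apply_eq, RCLike.star_def, ← Complex.normSq_eq_conj_mul_self] at this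
  exact_mod_cast this

/-- Ky Fan inequality in coordinates. -/
lemma aux_fan {N : ℕ} (T : Matrix (Fin N) (Fin N) ℂ) (hT : T * Tᴴ = 1) (A : Fin N → ℝ)
    (hA : Antitone A) (d : ℕ) (hdN : d ≤ N) :
    (∑ j ∈ Finset.univ.filter (fun j : Fin N => (j : ℕ) < d), ∑ l, A l * Complex.normSq (T j l)
      ≤ ∑ j ∈ Finset.univ.filter (fun j : Fin N => (j : ℕ) < d), A j) ∧
    (∑ j ∈ Finset.univ.filter (fun j : Fin N => (j : ℕ) < d), ∑ l, A l * Complex.normSq (T j l)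
      = ∑ j ∈ Finset.univ.filter (fun j : Fin N => (j : ℕ) < d), A j →
      ∀ j k : Fin N, (j : ℕ) < d → d ≤ (k : ℕ) →
        ∑ l, T j l * (A l : ℂ) * star (T k l) = 0) := by
  have hT' : Tᴴ * T = 1 := mul_eq_one_comm.1 hT
  rcases Nat.eq_zero_or_pos d with rfl | hd0
  · simp
  set p : Fin N → ℝ := fun l => ∑ j ∈ Finset.univ.filter (fun j : Fin N => (j : ℕ) < d),
    Complex.normSq (T j l) with hp
  have hsplit : ∀ l, p l + ∑ j ∈ Finset.univ.filter (fun j : Fin N => ¬ (j : ℕ) < d),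
    Complex.normSq (T j l) = 1 := by
    intro l
    rw [hp, Finset.sum_filter_add_sum_filter_not, aux_col T hT']
  have hq : ∀ l, 0 ≤ ∑ j ∈ Finset.univ.filter (fun j : Fin N => ¬ (j : ℕ) < d),
    Complex.normSq (T j l) := fun l => Finset.sum_nonneg fun j _ => Complex.normSq_nonneg _
  have hs : ∑ l, p l = d := by
    rw [hp, Finset.sum_comm, Finset.sum_congr rfl (fun j _ => aux_row T hT j)]
    simp [Fin.card_filter_val_lt, hdN]
  have hsum : ∑ j ∈ Finset.univ.filter (fun j : Fin N => (j : ℕ) < d),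
      ∑ l, A l * Complex.normSq (T j l) = ∑ l, A l * p l := by
    rw [Finset.sum_comm]
    simp only [hp, Finset.mul_sum]
  obtain ⟨c, hle, heq⟩ := aux_kf A p hA (fun l => Finset.sum_nonneg fun j _ => Complex.normSq_nonneg _)
    (fun l => by linarith [hsplit l, hq l]) d hd0 hdN hs
  rw [hsum]
  refine ⟨hle, fun he j k hj hk => ?_⟩
  have hjk : ∑ l, T j l * star (T k l) = 0 := by
    have := congrFun (congrFun hT j) k
    rw [Matrix.mul_apply, one_apply_ne (by rintro rfl; omega)] at this
    simpa using this
  have : ∑ l, T j l * (A l : ℂ) * star (T k l) = ∑ l, T j l * ((A l : ℂ) - c) * star (T k l) := by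
    have h2 : ∀ l, T j l * ((A l : ℂ) - c) * star (T k l) =
      T j l * (A l : ℂ) * star (T k l) - c * (T j l * star (T k l)) := fun l => by ring
    rw [Finset.sum_congr rfl (fun l _ => h2 l), Finset.sum_sub_distrib, ← Finset.mul_sum, hjk]
    simp
  rw [this]
  refine Finset.sum_eq_zero fun l _ => ?_
  rcases lt_trichotomy c (A l) with h | h | h
  · have h1 := (heq he l).1 h
    have h2 : ∑ j ∈ Finset.univ.filter (fun j : Fin N => ¬ (j : ℕ) < d),
      Complex.normSq (T j l) = 0 := by linarith [hsplit l]
    have := (Finset.sum_eq_zero_iff_of_nonneg (fun j _ => Complex.normSq_nonneg _)).1 h2 k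
      (by simp; omega)
    rw [Complex.normSq_eq_zero] at this
    simp [this]
  · simp [h]
  · have h1 := (heq he l).2 h
    have := (Finset.sum_eq_zero_iff_of_nonneg (fun j _ => Complex.normSq_nonneg _)).1 h1 j
      (by simp; omega)
    rw [Complex.normSq_eq_zero] at this
    simp [this]

lemma aux_lower {N : ℕ} (s : Finset (Fin N)) (hs : ∀ i j, i ≤ j → j ∈ s → i ∈ s) (j : Fin N) :
    j ∈ s ↔ (j : ℕ) < s.card := by
  constructor
  · intro h
    have : Finset.Iic j ⊆ s := fun i hi => hs i j (Finset.mem_Iic.1 hi) h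
    have := Finset.card_le_card this
    rw [Fin.card_Iic] at this
    omega
  · intro h
    by_contra hj
    have : s ⊆ Finset.Iio j := fun i hi => by
      rw [Finset.mem_Iio]
      by_contra h'
      exact hj (hs j i (not_lt.1 h') hi)
    have := Finset.card_le_card this
    rw [Fin.card_Iio] at this
    omega

/-- spectral theorem with reordered eigenvalues -/
lemma aux_spec {N : ℕ} (H : Matrix (Fin N) (Fin N) ℂ) (hH : H.IsHermitian) (A : Fin N → ℝ)
    (h : ∃ σ : Equiv.Perm (Fin N), A = hH.eigenvalues ∘ σ) :
    ∃ U : Matrix (Fin N) (Fin N) ℂ, U * Uᴴ = 1 ∧ Uᴴ * U = 1 ∧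
      H = U * diagonal (fun j => (A j : ℂ)) * Uᴴ := by
  obtain ⟨σ, rfl⟩ := h
  have h1 := hH.spectral_theorem
  set Q : Matrix (Fin N) (Fin N) ℂ := (hH.eigenvectorUnitary : Matrix (Fin N) (Fin N) ℂ) with hQ
  have hQ1 : Q * Qᴴ = 1 := Unitary.mul_star_self_of_mem hH.eigenvectorUnitary.2
  have hQ2 : Qᴴ * Q = 1 := Unitary.star_mul_self_of_mem hH.eigenvectorUnitary.2
  have e : H = Q * diagonal (fun j => (hH.eigenvalues j : ℂ)) * Qᴴ := by
    rw [Unitary.conjStarAlgAut_apply] at h1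
    exact h1
  refine ⟨Q.submatrix id σ, ?_, ?_, ?_⟩
  · rw [conjTranspose_submatrix, submatrix_mul_equiv, hQ1]; simp
  · rw [conjTranspose_submatrix, ← submatrix_mul _ _ _ id _ Function.bijective_id, hQ2]; simp
  · have : diagonal (fun j => (((hH.eigenvalues ∘ σ) j : ℝ) : ℂ)) =
      (diagonal (fun j => (hH.eigenvalues j : ℂ))).submatrix σ σ := by
      rw [submatrix_diagonal_equiv]; rfl
    rw [this, conjTranspose_submatrix, submatrix_mul_equiv, submatrix_mul_equiv]
    simpa using e

/-- trace of a restriction via a projection -/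
lemma aux_trace {N : ℕ} (H P : Matrix (Fin N) (Fin N) ℂ) (V : Submodule ℂ (Fin N → ℂ))
    (hP : ∀ v, P *ᵥ v ∈ V) (hP' : ∀ v ∈ V, P *ᵥ v = v)
    (h : ∀ v ∈ V, Matrix.toLin' H v ∈ V) :
    LinearMap.trace ℂ V ((Matrix.toLin' H).restrict h) = (P * H).trace := by
  let π : (Fin N → ℂ) →ₗ[ℂ] V := (Matrix.toLin' P).codRestrict V hP
  have h1 : (Matrix.toLin' H).restrict h = π ∘ₗ (Matrix.toLin' H ∘ₗ V.subtype) := by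
    ext1 v
    apply Subtype.ext
    have := hP' _ (h v v.2)
    simp only [toLin'_apply] at this
    exact this.symm
  have h2 : (Matrix.toLin' H ∘ₗ V.subtype) ∘ₗ π = Matrix.toLin' (H * P) := by
    rw [toLin'_mul]
    rfl
  rw [h1, LinearMap.trace_comp_comm', h2, Matrix.trace_toLin'_eq, Matrix.trace_mul_comm]

/-- the partial sums of eigenspaces, described by a spectral projection -/
lemma aux_V {N : ℕ} (W U : Matrix (Fin N) (Fin N) ℂ) (hU : U * Uᴴ = 1) (hU' : Uᴴ * U = 1)
    (M : Fin N → ℝ) (hW : W = U * diagonal (fun j => (M j : ℂ)) * Uᴴ)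
    (r : ℕ) (lam : Fin r → ℝ) (hlam : StrictAnti lam)
    (hspec : ∀ c : ℂ,
      Module.End.HasEigenvalue (Matrix.toLin' W) c ↔ ∃ i, (lam i : ℂ) = c)
    (V : Fin r → Submodule ℂ (Fin N → ℂ))
    (hV : ∀ i, V i = ⨆ j, ⨆ _ : j ≤ i,
      Module.End.eigenspace (Matrix.toLin' W) (lam j : ℂ)) :
    (∀ j, ∃ i, lam i = M j) ∧ ∀ i,
    (∀ v, (U * diagonal (fun j => if lam i ≤ M j then (1 : ℂ) else 0) * Uᴴ) *ᵥ v ∈ V i) ∧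
    (∀ v ∈ V i, (U * diagonal (fun j => if lam i ≤ M j then (1 : ℂ) else 0) * Uᴴ) *ᵥ v = v) := by
  have hWU : W * U = U * diagonal (fun j => (M j : ℂ)) := by
    rw [hW, Matrix.mul_assoc, hU', Matrix.mul_one]
  have hUW : Uᴴ * W = diagonal (fun j => (M j : ℂ)) * Uᴴ := by
    rw [hW, Matrix.mul_assoc, ← Matrix.mul_assoc, hU', Matrix.one_mul]
  have hcol : ∀ j, Uᵀ j ∈ Module.End.eigenspace (Matrix.toLin' W) (M j : ℂ) := by
    intro j
    rw [Module.End.mem_eigenspace_iff, toLin'_apply]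
    ext k
    have := congrFun (congrFun hWU k) j
    rw [mul_diagonal, Matrix.mul_apply] at this
    simp only [Pi.smul_apply, smul_eq_mul, transpose_apply]
    rw [mul_comm, ← this]
    rfl
  have hex : ∀ j, ∃ i, lam i = M j := by
    intro j
    have hne : Uᵀ j ≠ 0 := by
      intro h0
      have := congrFun (congrFun hU' j) j
      rw [Matrix.mul_apply, one_apply_eq] at this
      have h1 : ∀ k, U k j = 0 := fun k => congrFun h0 k
      simp [h1] at this
    obtain ⟨i, hi⟩ := (hspec (M j)).1 (Module.End.hasEigenvalue_of_hasEigenvector ⟨hcol j, hne⟩)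
    exact ⟨i, by exact_mod_cast hi⟩
  refine ⟨hex, fun i => ⟨fun v => ?_, fun v hv => ?_⟩⟩
  · rw [← mulVec_mulVec, ← mulVec_mulVec, mulVec_eq_sum]
    refine Submodule.sum_mem _ fun j _ => ?_
    rw [mulVec_diagonal]
    split_ifs with h
    · obtain ⟨i', hi'⟩ := hex j
      have hle : i' ≤ i := by
        rw [← hi'] at h
        exact hlam.le_iff_ge.1 h
      have : Uᵀ j ∈ V i := by
        rw [hV]
        refine (le_iSup₂_of_le (f := fun j (_ : j ≤ i) =>
          Module.End.eigenspace (Matrix.toLin' W) (lam j : ℂ)) i' hle le_rfl) ?_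
        rw [hi']
        exact hcol j
      rw [op_smul_eq_smul]
      exact Submodule.smul_mem _ _ this
    · simp
  · have hle : V i ≤ LinearMap.eqLocus (Matrix.toLin'
        (U * diagonal (fun j => if lam i ≤ M j then (1 : ℂ) else 0) * Uᴴ)) LinearMap.id := by
      rw [hV]
      refine iSup₂_le fun i' hi' w hw => ?_
      rw [Module.End.mem_eigenspace_iff, toLin'_apply] at hw
      rw [LinearMap.mem_eqLocus, toLin'_apply, LinearMap.id_apply, ← mulVec_mulVec, ← mulVec_mulVec]
      have h1 : diagonal (fun j => (M j : ℂ)) *ᵥ (Uᴴ *ᵥ w) = (lam i' : ℂ) • (Uᴴ *ᵥ w) := by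
        rw [mulVec_mulVec, ← hUW, ← mulVec_mulVec, hw, mulVec_smul]
      have h2 : diagonal (fun j => if lam i ≤ M j then (1 : ℂ) else 0) *ᵥ (Uᴴ *ᵥ w) = Uᴴ *ᵥ w := by
        ext j
        rw [mulVec_diagonal]
        split_ifs with h
        · simp
        · have := congrFun h1 j
          rw [mulVec_diagonal, Pi.smul_apply, smul_eq_mul] at this
          rcases mul_eq_mul_right_iff.1 this with h' | h'
          · exfalso
            have h3 : M j = lam i' := by exact_mod_cast h'
            exact h (h3 ▸ hlam.antitone hi')
          · rw [h']; simp
      rw [h2, mulVec_mulVec, hU, one_mulVec]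
    exact hle hv

lemma aux_main {N : ℕ}
    (H W : Matrix (Fin N) (Fin N) ℂ)
    (hH : H.IsHermitian) (hW : W.IsHermitian)
    (A M : Fin N → ℝ) (hA : Antitone A) (hM : Antitone M)
    (hAe : ∃ σ : Equiv.Perm (Fin N), A = hH.eigenvalues ∘ σ)
    (hMe : ∃ σ : Equiv.Perm (Fin N), M = hW.eigenvalues ∘ σ)
    (r : ℕ) (lam : Fin r → ℝ) (hlam : StrictAnti lam)
    (hspec : ∀ c : ℂ,
      Module.End.HasEigenvalue (Matrix.toLin' W) c ↔ ∃ i, (lam i : ℂ) = c)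
    (V : Fin r → Submodule ℂ (Fin N → ℂ))
    (hV : ∀ i, V i = ⨆ j, ⨆ _ : j ≤ i,
      Module.End.eigenspace (Matrix.toLin' W) (lam j : ℂ))
    (d : Fin r → ℕ) (hd : ∀ i, d i = Module.finrank ℂ (V i)) :
    (Matrix.trace (W * H)).re ≤ ∑ j, A j * M j ∧
    ((Matrix.trace (W * H)).re = ∑ j, A j * M j ↔
      H * W = W * H ∧ ∀ i : Fin r,
        ∃ h : ∀ v ∈ V i, Matrix.toLin' H v ∈ V i,
          LinearMap.trace ℂ (V i) ((Matrix.toLin' H).restrict h) =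
            ((∑ j ∈ Finset.univ.filter (fun j : Fin N => (j : ℕ) < d i), A j : ℝ) : ℂ)) := by
  obtain ⟨Q, hQ, hQ', hHQ⟩ := aux_spec H hH A hAe
  obtain ⟨U, hU, hU', hWU⟩ := aux_spec W hW M hMe
  obtain ⟨hex, hVP⟩ := aux_V W U hU hU' M hWU r lam hlam hspec V hV
  set T := Uᴴ * Q with hTdef
  have hT : T * Tᴴ = 1 := by
    rw [hTdef, conjTranspose_mul, conjTranspose_conjTranspose, Matrix.mul_assoc,
      ← Matrix.mul_assoc Q, hQ, Matrix.one_mul, hU']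
  set G := Uᴴ * H * U with hGdef
  have hGT : G = T * diagonal (fun j => (A j : ℂ)) * Tᴴ := by
    rw [hGdef, hHQ, hTdef, conjTranspose_mul, conjTranspose_conjTranspose]
    simp only [Matrix.mul_assoc]
  have hGjk : ∀ j k, G j k = ∑ l, T j l * (A l : ℂ) * star (T k l) := by
    intro j k
    rw [hGT, Matrix.mul_apply]
    simp only [mul_diagonal, conjTranspose_apply]
  set g : Fin N → ℝ := fun j => ∑ l, A l * Complex.normSq (T j l) with hg
  have hGg : ∀ j, G j j = (g j : ℂ) := by
    intro j
    rw [hGjk, hg]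
    push_cast
    refine Finset.sum_congr rfl fun l _ => ?_
    rw [← Complex.mul_conj, RCLike.star_def]
    ring
  have hHG : H = U * G * Uᴴ := by
    have : U * G * Uᴴ = (U * Uᴴ) * H * (U * Uᴴ) := by
      rw [hGdef]; simp only [Matrix.mul_assoc]
    rw [this, hU, Matrix.one_mul, Matrix.mul_one]
  have htr : ∀ f : Fin N → ℂ, (U * diagonal f * Uᴴ * H).trace = ∑ j, f j * (g j : ℂ) := by
    intro f
    have h1 : (U * diagonal f * Uᴴ * H).trace = (diagonal f * G).trace := by
      rw [Matrix.mul_assoc, Matrix.mul_assoc, Matrix.trace_mul_comm, hGdef]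
      simp only [Matrix.mul_assoc]
    rw [h1, Matrix.trace]
    simp only [diag_apply, diagonal_mul, hGg]
  have hcomm : ∀ f : Fin N → ℂ, (∀ j k, G j k * f k = f j * G j k) →
      H * (U * diagonal f * Uᴴ) = (U * diagonal f * Uᴴ) * H := by
    intro f hf
    have h1 : G * diagonal f = diagonal f * G := by
      ext j k
      rw [mul_diagonal, diagonal_mul, hf]
    have h2 : H * (U * diagonal f * Uᴴ) = U * (G * diagonal f) * Uᴴ := by
      rw [hHG]
      have : U * G * Uᴴ * (U * diagonal f * Uᴴ) = U * G * (Uᴴ * U) * diagonal f * Uᴴ := by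
        simp only [Matrix.mul_assoc]
      rw [this, hU', Matrix.mul_one]
      simp only [Matrix.mul_assoc]
    have h3 : (U * diagonal f * Uᴴ) * H = U * (diagonal f * G) * Uᴴ := by
      rw [hHG]
      have : (U * diagonal f * Uᴴ) * (U * G * Uᴴ) = U * diagonal f * (Uᴴ * U) * G * Uᴴ := by
        simp only [Matrix.mul_assoc]
      rw [this, hU', Matrix.mul_one]
      simp only [Matrix.mul_assoc]
    rw [h2, h3, h1]
  have htrWH : (W * H).trace.re = ∑ j, M j * g j := by
    rw [hWU, htr]
    rw [← Complex.ofReal_re (∑ j, M j * g j)]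
    push_cast
    rfl
  -- dimension
  have hdset : ∀ i, ∀ j : Fin N, lam i ≤ M j ↔ (j : ℕ) < d i := by
    intro i
    have hcard : d i = (Finset.univ.filter (fun j : Fin N => lam i ≤ M j)).card := by
      have h1 := aux_trace 1 _ (V i) (hVP i).1 (hVP i).2 (by intro v hv; simpa using hv)
      have h2 : (Matrix.toLin' (1 : Matrix (Fin N) (Fin N) ℂ)).restrict
          (by intro v hv; simpa using hv) = (LinearMap.id : V i →ₗ[ℂ] V i) := by
        ext1 v
        apply Subtype.ext
        simp [LinearMap.restrict_apply]
      rw [h2, LinearMap.trace_id, Matrix.mul_one, Matrix.mul_assoc, Matrix.trace_mul_comm,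
        Matrix.mul_assoc, hU', Matrix.mul_one, Matrix.trace_diagonal, ← hd] at h1
      rw [Finset.sum_boole] at h1
      exact_mod_cast h1
    intro j
    have := aux_lower (Finset.univ.filter (fun j : Fin N => lam i ≤ M j))
      (fun a b hab hb => by
        simp only [Finset.mem_filter, Finset.mem_univ, true_and] at hb ⊢
        exact hb.trans (hM hab)) j
    rw [hcard, ← this]
    simp
  have hdN : ∀ i, d i ≤ N := by
    intro i
    rw [hd]
    simpa using Submodule.finrank_le (V i)
  have hrestr : ∀ i, ∀ h : ∀ v ∈ V i, Matrix.toLin' H v ∈ V i,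
      LinearMap.trace ℂ (V i) ((Matrix.toLin' H).restrict h) =
        ((∑ j ∈ Finset.univ.filter (fun j : Fin N => (j : ℕ) < d i), g j : ℝ) : ℂ) := by
    intro i h
    rw [aux_trace H _ (V i) (hVP i).1 (hVP i).2 h, htr, Finset.sum_filter]
    push_cast
    refine Finset.sum_congr rfl fun j _ => ?_
    simp only [hdset]
    split_ifs <;> simp
  -- Abel summation
  have hsub : ∀ s : Finset (Fin N), ∑ j ∈ s, (A j - g j) = ∑ j ∈ s, A j - ∑ j ∈ s, g j :=
    fun s => Finset.sum_sub_distrib _ _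
  have htot : ∑ j, g j = ∑ j, A j := by
    rw [hg, Finset.sum_comm]
    refine Finset.sum_congr rfl fun l _ => ?_
    rw [← Finset.mul_sum, aux_col T (mul_eq_one_comm.1 hT), mul_one]
  obtain ⟨hab, habeq⟩ := aux_abel2 M (fun j => A j - g j) hM
    (fun e he => by rw [hsub]; linarith [(aux_fan T hT A hA e he).1])
    (by rw [hsub, htot, sub_self])
  have hdiff : ∑ j, M j * (A j - g j) = ∑ j, A j * M j - ∑ j, M j * g j := by
    rw [← Finset.sum_sub_distrib]
    exact Finset.sum_congr rfl fun j _ => by ring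
  rw [hdiff] at hab habeq
  rw [htrWH]
  refine ⟨by linarith, ?_⟩
  have hiff : ∑ j, M j * g j = ∑ j, A j * M j ↔
      ∀ i, ∑ j ∈ Finset.univ.filter (fun j : Fin N => (j : ℕ) < d i), g j =
        ∑ j ∈ Finset.univ.filter (fun j : Fin N => (j : ℕ) < d i), A j := by
    rw [eq_comm, ← sub_eq_zero, habeq]
    constructor
    · intro h i
      rcases (hdN i).eq_or_lt with h1 | h1
      · have : Finset.univ.filter (fun j : Fin N => (j : ℕ) < d i) = Finset.univ := by
          ext j; simp [h1]
        rw [this, htot]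
      · rcases Nat.eq_zero_or_pos (d i) with h0 | h0
        · simp [h0]
        · have h2 := h ⟨d i - 1, by omega⟩ ⟨d i, h1⟩ (by simp; omega) (by
            have h3 := (hdset i ⟨d i - 1, by omega⟩).2 (by simp; omega)
            have h4 := (hdset i ⟨d i, h1⟩).not.2 (by simp)
            linarith)
          simp only [hsub] at h2
          linarith
    · intro h j k hk hjk
      obtain ⟨i, hi⟩ := hex j
      have h1 := (hdset i j).1 hi.le
      have h2 := (hdset i k).not.1 (by linarith)
      have h3 : d i = (k : ℕ) := by omega
      rw [hsub, ← h3, h i, sub_self]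
  rw [hiff]
  constructor
  · intro h
    have hG1 : ∀ j k, M k < M j → G j k = 0 := by
      intro j k hjk
      obtain ⟨i, hi⟩ := hex j
      have h1 := (hdset i j).1 hi.le
      have h2 := (hdset i k).not.1 (by linarith)
      rw [hGjk]
      exact (aux_fan T hT A hA (d i) (hdN i)).2 (h i) j k h1 (by omega)
    have hGH : ∀ j k, G k j = star (G j k) := by
      intro j k
      have : Gᴴ = G := by
        rw [hGdef, conjTranspose_mul, conjTranspose_mul, conjTranspose_conjTranspose, hH.eq,
          Matrix.mul_assoc]
      rw [← conjTranspose_apply, this]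
    have hG2 : ∀ j k, M j = M k ∨ G j k = 0 := by
      intro j k
      rcases lt_trichotomy (M j) (M k) with h' | h' | h'
      · right; rw [hGH k j, hG1 k j h', star_zero]
      · exact Or.inl h'
      · exact Or.inr (hG1 j k h')
    refine ⟨?_, fun i => ?_⟩
    · rw [hWU]
      refine hcomm _ fun j k => ?_
      rcases hG2 j k with h' | h'
      · rw [h', mul_comm]
      · rw [h']; simp
    · have hc := hcomm (fun j => if lam i ≤ M j then (1 : ℂ) else 0) (fun j k => by
        rcases hG2 j k with h' | h'
        · simp only [h']; rw [mul_comm]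
        · rw [h']; simp)
      have hinv : ∀ v ∈ V i, Matrix.toLin' H v ∈ V i := by
        intro v hv
        rw [toLin'_apply]
        have h1 := (hVP i).1 (H *ᵥ v)
        rw [mulVec_mulVec, ← hc, ← mulVec_mulVec, (hVP i).2 v hv] at h1
        exact h1
      exact ⟨hinv, by rw [hrestr, h i]⟩
  · rintro ⟨-, h⟩ i
    obtain ⟨hinv, h1⟩ := h i
    rw [hrestr] at h1
    exact_mod_cast h1

/-- Lemma `ineq` of the paper: for traceless skew-Hermitian `X, ω`,
`-Tr(ωX) ≤ ⟨‖ω‖, ‖X‖⟩ = ∑ Aⱼ Mⱼ`, with equality iff `X` commutes with `ω`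
and the trace of `-iX` restricted to each `V_k(ω)` equals `A₁ + ⋯ + A_{d_k}`. -/
theorem stmt0 (N : ℕ) (hN : 2 ≤ N)
    (X ω : Matrix (Fin N) (Fin N) ℂ)
    (hXtr : X.trace = 0) (hωtr : ω.trace = 0)
    (hX : ((-Complex.I) • X).IsHermitian) (hω : ((-Complex.I) • ω).IsHermitian)
    (A M : Fin N → ℝ) (hA : Antitone A) (hM : Antitone M)
    (hAe : ∃ σ : Equiv.Perm (Fin N), A = hX.eigenvalues ∘ σ)
    (hMe : ∃ σ : Equiv.Perm (Fin N), M = hω.eigenvalues ∘ σ)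
    (r : ℕ) (lam : Fin r → ℝ) (hlam : StrictAnti lam)
    (hspec : ∀ c : ℂ,
      Module.End.HasEigenvalue (Matrix.toLin' ((-Complex.I) • ω)) c ↔ ∃ i, (lam i : ℂ) = c)
    (V : Fin r → Submodule ℂ (Fin N → ℂ))
    (hV : ∀ i, V i = ⨆ j, ⨆ _ : j ≤ i,
      Module.End.eigenspace (Matrix.toLin' ((-Complex.I) • ω)) (lam j : ℂ))
    (d : Fin r → ℕ) (hd : ∀ i, d i = Module.finrank ℂ (V i)) :
    -(Matrix.trace (ω * X)).re ≤ ∑ j, A j * M j ∧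
    (-(Matrix.trace (ω * X)).re = ∑ j, A j * M j ↔
      X * ω = ω * X ∧ ∀ i : Fin r,
        ∃ h : ∀ v ∈ V i, Matrix.toLin' ((-Complex.I) • X) v ∈ V i,
          LinearMap.trace ℂ (V i) ((Matrix.toLin' ((-Complex.I) • X)).restrict h) =
            ((∑ j ∈ Finset.univ.filter (fun j : Fin N => (j : ℕ) < d i), A j : ℝ) : ℂ)) := by
  have hneg : ω * X = -(((-Complex.I) • ω) * ((-Complex.I) • X)) := by
    rw [smul_mul_smul_comm]
    simp
  have hc : X * ω = ω * X ↔
      ((-Complex.I) • X) * ((-Complex.I) • ω) = ((-Complex.I) • ω) * ((-Complex.I) • X) := by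
    rw [smul_mul_smul_comm, smul_mul_smul_comm]
    simp
  have hre : -(Matrix.trace (ω * X)).re =
      (Matrix.trace (((-Complex.I) • ω) * ((-Complex.I) • X))).re := by
    rw [hneg, Matrix.trace_neg, Complex.neg_re, neg_neg]
  rw [hre, hc]
  exact aux_main _ _ hX hω A M hA hM hAe hMe r lam hlam hspec V hV d hd
end

section
/- Let N ≥ 1. For g in SU(N) (an N×N complex unitary matrix with determinant 1) and real numbers a ≤ b, say g ∼ [a,b] if every eigenvalue of g is of the form e^{iφ} with φ ∈ [a,b]. If g₁ ∼ [a₁,b₁] and g₂ ∼ [a₂,b₂], then g₁g₂ ∼ [a₁+a₂, b₁+b₂]. -/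
open Matrix

open scoped ComplexOrder in
theorem aux_pos {N : ℕ} (U : EuclideanSpace ℂ (Fin N) →L[ℂ] EuclideanSpace ℂ (Fin N))
    (hU : U ∈ unitary (EuclideanSpace ℂ (Fin N) →L[ℂ] EuclideanSpace ℂ (Fin N)))
    (k : ℂ) (r : ℝ) (h : ∀ c ∈ spectrum ℂ U, r ≤ (k * c).re)
    (v : EuclideanSpace ℂ (Fin N)) :
    r * ‖v‖ ^ 2 ≤ (inner ℂ v (k • U v)).re := by
  have hn : IsStarNormal U := ⟨by
    have := Unitary.star_mul_self_of_mem hU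
    have := Unitary.mul_star_self_of_mem hU
    simp_all [Commute, SemiconjBy]⟩
  have h1 : 0 ≤ cfc (fun z : ℂ => k * z + star (k * z) - (2 * r : ℂ)) U := by
    apply cfc_nonneg
    intro c hc
    have := h c hc
    rw [Complex.le_def]
    simp at this ⊢
    constructor <;> linarith
  have h2 : cfc (fun z : ℂ => k * z + star (k * z) - (2 * r : ℂ)) U
      = k • U + star (k • U) - algebraMap ℂ _ (2 * r : ℂ) := by
    rw [cfc_sub .., cfc_add .., cfc_star, cfc_const_mul_id .., cfc_const ..]
  rw [h2, ContinuousLinearMap.nonneg_iff_isPositive] at h1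
  have h3 := h1.re_inner_nonneg_right v
  have h4 : (inner ℂ v ((star (k • U)) v)).re = (inner ℂ v (k • U v)).re := by
    rw [ContinuousLinearMap.star_eq_adjoint, ContinuousLinearMap.adjoint_inner_right]
    exact inner_re_symm (𝕜 := ℂ) _ _
  have h5 : (inner ℂ v ((algebraMap ℂ (EuclideanSpace ℂ (Fin N) →L[ℂ] EuclideanSpace ℂ (Fin N)) (2 * r : ℂ)) v)).re = 2 * r * ‖v‖^2 := by
    rw [Algebra.algebraMap_eq_smul_one]
    simp only [ContinuousLinearMap.smul_apply, ContinuousLinearMap.one_apply, inner_smul_right, inner_self_eq_norm_sq_to_K]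
    rw [← Complex.ofReal_ofNat, ← Complex.ofReal_mul, Complex.re_ofReal_mul]
    norm_cast
  simp only [ContinuousLinearMap.sub_apply, ContinuousLinearMap.add_apply, inner_sub_right, inner_add_right, map_sub, map_add, RCLike.re_to_complex, h4, h5] at h3
  simp only [ContinuousLinearMap.smul_apply] at h3
  linarith

theorem aux_inner {N : ℕ} (v w : EuclideanSpace ℂ (Fin N)) :
    inner ℝ v w = (inner ℂ v w).re := by
  rw [PiLp.inner_apply, PiLp.inner_apply, Complex.re_sum]
  rfl

theorem aux_angle {N : ℕ} (U : EuclideanSpace ℂ (Fin N) →L[ℂ] EuclideanSpace ℂ (Fin N))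
    (hU : U ∈ unitary (EuclideanSpace ℂ (Fin N) →L[ℂ] EuclideanSpace ℂ (Fin N)))
    (a b : ℝ) (hab : a ≤ b) (hl : (b - a) / 2 ≤ Real.pi)
    (h : ∀ c ∈ spectrum ℂ U, ∃ φ : ℝ, a ≤ φ ∧ φ ≤ b ∧ c = Complex.exp (φ * Complex.I))
    (k : ℂ) (hk : k = Complex.exp ((-((a + b) / 2) : ℝ) * Complex.I))
    (v : EuclideanSpace ℂ (Fin N)) (hv : ‖v‖ = 1) :
    InnerProductGeometry.angle v (k • U v) ≤ (b - a) / 2 := by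
  have hn : ‖k • U v‖ = 1 := by
    rw [norm_smul, hk, Complex.norm_exp_ofReal_mul_I, one_mul,
      ContinuousLinearMap.norm_map_of_mem_unitary hU, hv]
  have := aux_pos U hU k (Real.cos ((b - a) / 2)) ?_ v
  · rw [InnerProductGeometry.angle, hv, hn]
    have h0 : (b - a) / 2 = Real.arccos (Real.cos ((b - a) / 2)) :=
      (Real.arccos_cos (by linarith) hl).symm
    rw [h0]
    apply Real.arccos_le_arccos
    rw [hv] at this
    simp only [one_pow, mul_one, div_one] at this ⊢
    rw [aux_inner]
    exact this
  · intro c hc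
    obtain ⟨φ, h1, h2, rfl⟩ := h c hc
    rw [hk, ← Complex.exp_add, ← add_mul, ← Complex.ofReal_add, Complex.exp_ofReal_mul_I_re,
      ← Real.cos_abs (_ + φ)]
    apply Real.cos_le_cos_of_nonneg_of_le_pi (abs_nonneg _) hl
    rw [abs_le]; constructor <;> linarith

theorem stmt2 (N : ℕ) (hN : 1 ≤ N)
    (g₁ g₂ : Matrix (Fin N) (Fin N) ℂ)
    (hg₁ : g₁ ∈ unitary (Matrix (Fin N) (Fin N) ℂ)) (hd₁ : g₁.det = 1)
    (hg₂ : g₂ ∈ unitary (Matrix (Fin N) (Fin N) ℂ)) (hd₂ : g₂.det = 1)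
    (a₁ b₁ a₂ b₂ : ℝ) (hab₁ : a₁ ≤ b₁) (hab₂ : a₂ ≤ b₂)
    (h₁ : ∀ c ∈ spectrum ℂ g₁, ∃ φ : ℝ, a₁ ≤ φ ∧ φ ≤ b₁ ∧ c = Complex.exp (φ * Complex.I))
    (h₂ : ∀ c ∈ spectrum ℂ g₂, ∃ φ : ℝ, a₂ ≤ φ ∧ φ ≤ b₂ ∧ c = Complex.exp (φ * Complex.I)) :
    ∀ c ∈ spectrum ℂ (g₁ * g₂),
      ∃ φ : ℝ, a₁ + a₂ ≤ φ ∧ φ ≤ b₁ + b₂ ∧ c = Complex.exp (φ * Complex.I) := by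
  intro c hc
  let T := Matrix.toEuclideanCLM (n := Fin N) (𝕜 := ℂ)
  have hs : ∀ g, spectrum ℂ (T g) = spectrum ℂ g := fun g => AlgEquiv.spectrum_eq T g
  have hu₁ : T g₁ ∈ unitary _ := Unitary.map_mem T hg₁
  have hu₂ : T g₂ ∈ unitary _ := Unitary.map_mem T hg₂
  -- eigenvector
  obtain ⟨v, hv, hev⟩ : ∃ v : EuclideanSpace ℂ (Fin N), ‖v‖ = 1 ∧ T g₁ (T g₂ v) = c • v := by
    have hc' : c ∈ spectrum ℂ (Matrix.toEuclideanLin (𝕜 := ℂ) (g₁ * g₂)) := by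
      rw [Matrix.spectrum_toEuclideanLin]; exact hc
    obtain ⟨w, hw⟩ := (Module.End.hasEigenvalue_iff_mem_spectrum.mpr hc').exists_hasEigenvector
    have hw1 : T (g₁ * g₂) w = c • w := hw.apply_eq_smul
    have hw0 : w ≠ 0 := hw.2
    refine ⟨((‖w‖⁻¹ : ℝ) : ℂ) • w, ?_, ?_⟩
    · rw [norm_smul]; simp [hw0]
    · rw [map_mul] at hw1
      rw [map_smul, map_smul, smul_comm]
      congr 1
  have hcn : ‖c‖ = 1 := by
    have := congrArg norm hev
    rw [ContinuousLinearMap.norm_map_of_mem_unitary hu₁,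
      ContinuousLinearMap.norm_map_of_mem_unitary hu₂, norm_smul, hv] at this
    linarith
  obtain ⟨m, hm⟩ : ∃ m, m = (a₁ + b₁) / 2 + (a₂ + b₂) / 2 := ⟨_, rfl⟩
  obtain ⟨d, hd⟩ : ∃ d, d = Complex.exp ((-m : ℝ) * Complex.I) * c := ⟨_, rfl⟩
  have hdn : ‖d‖ = 1 := by rw [hd, norm_mul, Complex.norm_exp_ofReal_mul_I, hcn, one_mul]
  have hde : d = Complex.exp (d.arg * Complex.I) := by
    have := Complex.norm_mul_exp_arg_mul_I d
    rw [hdn] at this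
    simpa using this.symm
  have hkey : |d.arg| ≤ (b₁ - a₁) / 2 + (b₂ - a₂) / 2 := by
    by_cases hpi : Real.pi ≤ (b₁ - a₁) / 2 + (b₂ - a₂) / 2
    · exact (Complex.abs_arg_le_pi d).trans hpi
    push Not at hpi
    obtain ⟨k₁, hk₁⟩ : ∃ k, k = Complex.exp ((-((a₁ + b₁) / 2) : ℝ) * Complex.I) := ⟨_, rfl⟩
    obtain ⟨k₂, hk₂⟩ : ∃ k, k = Complex.exp ((-((a₂ + b₂) / 2) : ℝ) * Complex.I) := ⟨_, rfl⟩
    have A2 := aux_angle (T g₂) hu₂ a₂ b₂ hab₂ (by linarith) (by rw [hs]; exact h₂) k₂ hk₂ v hv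
    have A1 := aux_angle (T g₁) hu₁ a₁ b₁ hab₁ (by linarith) (by rw [hs]; exact h₁) k₁ hk₁
      (k₂ • T g₂ v) (by
        rw [norm_smul, hk₂, Complex.norm_exp_ofReal_mul_I, one_mul,
          ContinuousLinearMap.norm_map_of_mem_unitary hu₂, hv])
    have hkd : k₁ • T g₁ (k₂ • T g₂ v) = d • v := by
      rw [map_smul, hev, smul_smul, smul_smul, hd, hk₁, hk₂, ← Complex.exp_add, hm]
      congr 3
      push_cast; ring
    rw [hkd] at A1
    have A := InnerProductGeometry.angle_le_angle_add_angle v (k₂ • T g₂ v) (d • v)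
    have B : InnerProductGeometry.angle v (d • v) = |d.arg| := by
      rw [InnerProductGeometry.angle, norm_smul, hv, hdn]
      have : inner ℝ v (d • v) = d.re := by
        rw [aux_inner, inner_smul_right, inner_self_eq_norm_sq_to_K, hv]
        simp
      rw [this]
      have : d.re = Real.cos |d.arg| := by
        conv_lhs => rw [hde]
        rw [Complex.exp_ofReal_mul_I_re, Real.cos_abs]
      rw [this]
      simp only [mul_one, div_one]
      exact Real.arccos_cos (abs_nonneg _) (Complex.abs_arg_le_pi d)
    linarith
  rw [abs_le] at hkey
  refine ⟨m + d.arg, by linarith, by linarith, ?_⟩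
  rw [Complex.ofReal_add, add_mul, Complex.exp_add, ← hde, hd, ← mul_assoc, ← Complex.exp_add]
  simp
end
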